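/- arXiv:2208.09643 — 7 statements merged into one kernel-verified Lean document; each statement's English description precedes it below -/
import Mathlib

section
/- Let G=(V,E) be a graph with V={1,...,n} and let C be a star with p ≥ 1 edges. Let μ(C) ∈ ℝ^n be the mean of the points {v^e : e ∈ C}. Then the sum over e ∈ C of the squared Euclidean distances ‖v^e − μ(C)‖₂² equals p − 1. -/
open Finset

/-- The point in `ℝ^n` associated with an edge `e`: coordinate `i` is `1`
if vertex `i` is incident to `e`, and `0` otherwise. -/
noncomputable def edgePoint {n : ℕ} (e : Sym2 (Fin n)) : Fin n → ℝ :=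
  fun i => if i ∈ e then 1 else 0

/-- The mean of the points associated with the edges of `C`. -/
noncomputable def clusterMean {n : ℕ} (C : Finset (Sym2 (Fin n))) : Fin n → ℝ :=
  fun i => (∑ e ∈ C, edgePoint e i) / (C.card : ℝ)

theorem stmt_1 {n : ℕ} (G : SimpleGraph (Fin n)) [DecidableRel G.Adj]
    (C : Finset (Sym2 (Fin n))) (hC : C ⊆ G.edgeFinset)
    (p : ℕ) (hp : 1 ≤ p) (hcard : C.card = p)
    (v : Fin n) (hstar : ∀ e ∈ C, v ∈ e) :
    ∑ e ∈ C, ∑ i, (edgePoint e i - clusterMean C i) ^ 2 = (p : ℝ) - 1 := by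
  classical
  have hp0 : (p : ℝ) ≠ 0 := by positivity
  have hx2 : ∀ (e : Sym2 (Fin n)) i, edgePoint e i ^ 2 = edgePoint e i := by
    intro e i
    unfold edgePoint
    split_ifs <;> norm_num
  have hrow : ∀ e ∈ C, ∑ i, edgePoint e i = 2 := by
    intro e he
    have hE := hC he
    rw [SimpleGraph.mem_edgeFinset] at hE
    induction e using Sym2.ind with
    | _ a b =>
      have hab : a ≠ b := G.ne_of_adj hE
      have h1 : ∀ i, edgePoint s(a, b) i
          = (if i = a then (1 : ℝ) else 0) + (if i = b then (1 : ℝ) else 0) := by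
        intro i
        unfold edgePoint
        simp only [Sym2.mem_iff]
        by_cases h : i = a
        · subst h
          simp [hab]
        · simp [h]
      simp only [h1, Finset.sum_add_distrib]
      simp
      norm_num
  set S : Fin n → ℝ := fun i => ∑ e ∈ C, edgePoint e i with hS
  have hSv : S v = p := by
    have : S v = ∑ e ∈ C, (1 : ℝ) := by
      apply Finset.sum_congr rfl
      intro e he
      simp [edgePoint, hstar e he]
    rw [this]
    simp [hcard]
  have hSi : ∀ i, i ≠ v → S i ^ 2 = S i := by
    intro i hi
    have : S i = ∑ e ∈ C, (if e = s(v, i) then (1 : ℝ) else 0) := by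
      apply Finset.sum_congr rfl
      intro e he
      have h := Sym2.mem_and_mem_iff (z := e) (Ne.symm hi)
      have h2 := hstar e he
      have h3 : i ∈ e ↔ e = s(v, i) := by tauto
      simp only [edgePoint, h3]
    rw [this, Finset.sum_ite_eq']
    split_ifs <;> norm_num
  have hSum : ∑ i, S i = 2 * p := by
    simp only [hS]
    rw [Finset.sum_comm, Finset.sum_congr rfl hrow]
    simp [hcard, mul_comm]
  have hSum2 : ∑ i, S i ^ 2 = p ^ 2 + p := by
    have h1 := Finset.add_sum_erase Finset.univ S (Finset.mem_univ v)
    have h2 := Finset.add_sum_erase Finset.univ (fun i => S i ^ 2) (Finset.mem_univ v)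
    have h3 : ∑ i ∈ Finset.univ.erase v, S i ^ 2 = ∑ i ∈ Finset.univ.erase v, S i :=
      Finset.sum_congr rfl fun i hi => hSi i (Finset.ne_of_mem_erase hi)
    rw [hSv, hSum] at h1
    simp only [hSv, h3] at h2
    linarith
  have hcol : ∀ i, ∑ e ∈ C, (edgePoint e i - clusterMean C i) ^ 2 = S i - S i ^ 2 / p := by
    intro i
    have hm : clusterMean C i = S i / p := by simp [clusterMean, hS, hcard]
    have h1 : ∀ e ∈ C, (edgePoint e i - clusterMean C i) ^ 2
        = edgePoint e i - edgePoint e i * (2 * (S i / p)) + (S i / p) ^ 2 := by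
      intro e _
      rw [hm]
      linear_combination hx2 e i
    rw [Finset.sum_congr rfl h1, Finset.sum_add_distrib, Finset.sum_sub_distrib,
      ← Finset.sum_mul, Finset.sum_const, hcard, nsmul_eq_mul]
    change S i - S i * _ + _ = _
    field_simp
    ring
  rw [Finset.sum_comm, Finset.sum_congr rfl fun i _ => hcol i, Finset.sum_sub_distrib,
    ← Finset.sum_div, hSum, hSum2]
  field_simp
  ring
end

section
/- Let G=(V,E) be a graph with V={1,...,n} and let S={i₁ < i₂ < ... < i_k} be a vertex cover of G. For j=1,...,k let E_j be the set of edges e such that vertex i_j is incident to e and no vertex i_{j'} with j' < j is incident to e, and assume each E_j is nonempty. Then (E₁,...,E_k) is a partition of E into k stars, and the sum over j of the sums of squared Euclidean distances of the points {v^e : e ∈ E_j} to their mean equals |E| − k. -/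
open Finset

/-- A set of edges is a star if all its edges share a common vertex. -/
def IsStar {n : ℕ} (C : Finset (Sym2 (Fin n))) : Prop :=
  ∃ v : Fin n, ∀ e ∈ C, v ∈ e

lemma edgePoint_sum_coord {n : ℕ} (e : Sym2 (Fin n)) (he : ¬ e.IsDiag) :
    ∑ i, edgePoint e i = 2 := by
  induction e using Sym2.ind with
  | _ a b =>
    have hab : a ≠ b := by simpa using he
    have h : ∀ i, edgePoint s(a, b) i = (if i = a then (1 : ℝ) else 0) + (if i = b then 1 else 0) := by
      intro i
      unfold edgePoint
      by_cases h1 : i = a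
      · subst h1
        simp [hab]
      · simp [h1]
    simp only [h, Finset.sum_add_distrib]
    simp
    norm_num

lemma star_cost {n : ℕ} (C : Finset (Sym2 (Fin n))) (v : Fin n) (hC : C.Nonempty)
    (hd : ∀ e ∈ C, ¬ e.IsDiag) (hv : ∀ e ∈ C, v ∈ e) :
    ∑ e ∈ C, ∑ i, (edgePoint e i - clusterMean C i) ^ 2 = (C.card : ℝ) - 1 := by
  have hc : (C.card : ℝ) ≠ 0 := by
    exact_mod_cast hC.card_pos.ne'
  have hcoord : ∀ i, ∑ e ∈ C, (edgePoint e i - clusterMean C i) ^ 2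
      = (∑ e ∈ C, edgePoint e i) - (∑ e ∈ C, edgePoint e i) ^ 2 / C.card := by
    intro i
    have hx : ∀ e ∈ C, (edgePoint e i - clusterMean C i) ^ 2
        = edgePoint e i - 2 * clusterMean C i * edgePoint e i + clusterMean C i ^ 2 := by
      intro e _
      have : edgePoint e i ^ 2 = edgePoint e i := by
        unfold edgePoint
        split_ifs <;> norm_num
      linear_combination this
    rw [Finset.sum_congr rfl hx, Finset.sum_add_distrib, Finset.sum_sub_distrib,
      ← Finset.mul_sum, Finset.sum_const, nsmul_eq_mul]
    unfold clusterMean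
    field_simp
    ring
  have hsq : ∀ i, (∑ e ∈ C, edgePoint e i) ^ 2
      = (∑ e ∈ C, edgePoint e i) + if i = v then (C.card : ℝ) ^ 2 - C.card else 0 := by
    intro i
    have hS : ∑ e ∈ C, edgePoint e i = ((C.filter (fun e => i ∈ e)).card : ℝ) := by
      simp [edgePoint]
    by_cases h : i = v
    · subst h
      rw [hS, Finset.filter_true_of_mem hv]
      simp
    · have h1 : (C.filter (fun e => i ∈ e)).card ≤ 1 := by
        rw [Finset.card_le_one]
        intro a ha b hb
        rw [Finset.mem_filter] at ha hb
        rw [(Sym2.mem_and_mem_iff h).1 ⟨ha.2, hv a ha.1⟩,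
          (Sym2.mem_and_mem_iff h).1 ⟨hb.2, hv b hb.1⟩]
      rw [hS]
      generalize (C.filter (fun e => i ∈ e)).card = m at h1
      interval_cases m <;> simp [h]
  have htot : ∑ i, ∑ e ∈ C, edgePoint e i = 2 * (C.card : ℝ) := by
    rw [Finset.sum_comm, Finset.sum_congr rfl (fun e he => edgePoint_sum_coord e (hd e he))]
    simp [mul_comm]
  rw [Finset.sum_comm, Finset.sum_congr rfl (fun i _ => hcoord i), Finset.sum_sub_distrib,
    ← Finset.sum_div, Finset.sum_congr rfl (fun i _ => hsq i), Finset.sum_add_distrib, htot]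
  simp only [Finset.sum_ite_eq', Finset.mem_univ, if_true]
  field_simp
  ring

theorem stmt_2 {n k : ℕ} (G : SimpleGraph (Fin n)) [DecidableRel G.Adj]
    (f : Fin k → Fin n) (hmono : StrictMono f)
    (hcover : ∀ e ∈ G.edgeFinset, ∃ j : Fin k, f j ∈ e)
    (E : Fin k → Finset (Sym2 (Fin n)))
    (hE : ∀ j : Fin k,
      E j = G.edgeFinset.filter (fun e => f j ∈ e ∧ ∀ j' : Fin k, j' < j → f j' ∉ e))
    (hne : ∀ j : Fin k, (E j).Nonempty) :
    (∀ j j' : Fin k, j ≠ j' → Disjoint (E j) (E j')) ∧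
    (G.edgeFinset = Finset.univ.biUnion E) ∧
    (∀ j : Fin k, IsStar (E j)) ∧
    (∑ j : Fin k, ∑ e ∈ E j, ∑ i, (edgePoint e i - clusterMean (E j) i) ^ 2
      = (G.edgeFinset.card : ℝ) - (k : ℝ)) := by
  have hmem : ∀ j e, e ∈ E j ↔ e ∈ G.edgeFinset ∧ f j ∈ e ∧ ∀ j' : Fin k, j' < j → f j' ∉ e := by
    intro j e
    rw [hE j, Finset.mem_filter]
  have hdisj : ∀ j j' : Fin k, j ≠ j' → Disjoint (E j) (E j') := by
    intro j j' hjj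
    rw [Finset.disjoint_left]
    intro e h1 h2
    rw [hmem] at h1 h2
    rcases lt_or_gt_of_ne hjj with h | h
    · exact h2.2.2 j h h1.2.1
    · exact h1.2.2 j' h h2.2.1
  have hun : G.edgeFinset = Finset.univ.biUnion E := by
    ext e
    rw [Finset.mem_biUnion]
    constructor
    · intro he
      obtain ⟨j, hj, hmin⟩ := WellFounded.has_min (wellFounded_lt (α := Fin k))
        {j | f j ∈ e} (hcover e he)
      exact ⟨j, Finset.mem_univ j, (hmem j e).2 ⟨he, hj, fun j' hlt hj' => hmin j' hj' hlt⟩⟩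
    · rintro ⟨j, _, hj⟩
      exact ((hmem j e).1 hj).1
  refine ⟨hdisj, hun, fun j => ⟨f j, fun e he => ((hmem j e).1 he).2.1⟩, ?_⟩
  have hcost : ∀ j ∈ (Finset.univ : Finset (Fin k)),
      ∑ e ∈ E j, ∑ i, (edgePoint e i - clusterMean (E j) i) ^ 2 = ((E j).card : ℝ) - 1 := by
    intro j _
    refine star_cost (E j) (f j) (hne j) ?_ (fun e he => ((hmem j e).1 he).2.1)
    intro e he
    exact G.not_isDiag_of_mem_edgeFinset ((hmem j e).1 he).1
  have hcard : (G.edgeFinset.card : ℝ) = ∑ j, ((E j).card : ℝ) := by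
    rw [hun, Finset.card_biUnion (fun j _ j' _ h => hdisj j j' h)]
    push_cast
    rfl
  rw [Finset.sum_congr rfl hcost, Finset.sum_sub_distrib, hcard]
  simp
end

section
/- Let G=(V,E) be a graph with V={1,...,n} and let C be a nonempty set of p edges of G. Then the minimum over μ ∈ ℝ^n of the sum over e ∈ C of the ℓ₁-distances ‖v^e − μ‖₁ equals Σ_{i=1}^n min{d_C(i), p − d_C(i)}, where d_C(i) is the number of edges of C incident to vertex i. -/
open Finset

/-- `edgeDeg C i` is the number of edges of `C` incident to vertex `i`. -/
def edgeDeg {n : ℕ} (C : Finset (Sym2 (Fin n))) (i : Fin n) : ℕ :=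
  (C.filter (fun e => i ∈ e)).card

theorem coord_sum {n : ℕ} (C : Finset (Sym2 (Fin n))) (i : Fin n) (m : ℝ) :
    ∑ e ∈ C, |edgePoint e i - m| =
      (edgeDeg C i : ℝ) * |1 - m| + ((C.card : ℝ) - (edgeDeg C i : ℝ)) * |m| := by
  have h : (C.card : ℝ) = (edgeDeg C i : ℝ) + ((C.filter (fun e => ¬ i ∈ e)).card : ℝ) := by
    rw [edgeDeg]
    exact_mod_cast (Finset.card_filter_add_card_filter_not (s := C) (fun e => i ∈ e)).symm
  rw [h, ← Finset.sum_filter_add_sum_filter_not C (fun e => i ∈ e)]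
  have h1 : ∑ e ∈ C.filter (fun e => i ∈ e), |edgePoint e i - m|
      = (edgeDeg C i : ℝ) * |1 - m| := by
    rw [edgeDeg, ← nsmul_eq_mul, ← Finset.sum_const]
    refine Finset.sum_congr rfl fun e he => ?_
    simp [edgePoint, (Finset.mem_filter.mp he).2]
  have h2 : ∑ e ∈ C.filter (fun e => ¬ i ∈ e), |edgePoint e i - m|
      = ((C.filter (fun e => ¬ i ∈ e)).card : ℝ) * |m| := by
    rw [← nsmul_eq_mul, ← Finset.sum_const]
    refine Finset.sum_congr rfl fun e he => ?_
    simp [edgePoint, (Finset.mem_filter.mp he).2]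
  rw [h1, h2]
  ring

theorem stmt_3 {n : ℕ} (G : SimpleGraph (Fin n)) [DecidableRel G.Adj]
    (C : Finset (Sym2 (Fin n))) (hC : C ⊆ G.edgeFinset)
    (p : ℕ) (hcard : C.card = p) (hne : C.Nonempty) :
    IsLeast {s : ℝ | ∃ μ : Fin n → ℝ, s = ∑ e ∈ C, ∑ i, |edgePoint e i - μ i|}
      (∑ i, min ((edgeDeg C i : ℝ)) ((p : ℝ) - (edgeDeg C i : ℝ))) := by
  subst hcard
  constructor
  · refine ⟨fun i => if (edgeDeg C i : ℝ) ≤ (C.card : ℝ) - (edgeDeg C i : ℝ) then 0 else 1, ?_⟩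
    rw [Finset.sum_comm]
    refine Finset.sum_congr rfl fun i _ => ?_
    rw [coord_sum]
    beta_reduce
    split_ifs with h
    · simp [min_eq_left h]
    · simp [min_eq_right (le_of_not_ge h)]
  · rintro s ⟨μ, rfl⟩
    rw [Finset.sum_comm]
    refine Finset.sum_le_sum fun i _ => ?_
    rw [coord_sum]
    have hd : (edgeDeg C i : ℝ) ≤ (C.card : ℝ) := by
      exact_mod_cast Finset.card_filter_le C _
    have hd0 : (0 : ℝ) ≤ (edgeDeg C i : ℝ) := Nat.cast_nonneg _
    set a : ℝ := (edgeDeg C i : ℝ)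
    set b : ℝ := (C.card : ℝ) - a with hb
    have hb0 : 0 ≤ b := by linarith
    have ht : 1 ≤ |1 - μ i| + |μ i| := by
      have := abs_add_le (1 - μ i) (μ i)
      simpa using this
    have hm : 0 ≤ min a b := le_min hd0 hb0
    calc min a b ≤ min a b * (|1 - μ i| + |μ i|) := le_mul_of_one_le_right hm ht
      _ = min a b * |1 - μ i| + min a b * |μ i| := by ring
      _ ≤ a * |1 - μ i| + b * |μ i| := by
        gcongr
        · exact min_le_left _ _
        · exact min_le_right _ _
end

section
/- Let G=(V,E) be a triangle-free graph with V={1,...,n} in which every vertex has degree at most 3, and let C be a nonempty set of p edges of G that is not a star. Then Σ_{i=1}^n min{d_C(i), p − d_C(i)} ≥ (4/3)·p, where d_C(i) is the number of edges of C incident to vertex i. Consequently the optimal k-medians (ℓ₁) cost of the cluster {v^e : e ∈ C} is at least (4/3)·p. -/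
open Finset

theorem aux_deg_le {n : ℕ} (G : SimpleGraph (Fin n)) [DecidableRel G.Adj]
    (C : Finset (Sym2 (Fin n))) (hC : C ⊆ G.edgeFinset) (v : Fin n) :
    edgeDeg C v ≤ G.degree v := by
  rw [← G.card_incidenceFinset_eq_degree]
  unfold edgeDeg
  apply Finset.card_le_card
  intro e he
  rw [Finset.mem_filter] at he
  have := hC he.1
  rw [SimpleGraph.mem_edgeFinset] at this
  rw [SimpleGraph.mem_incidenceFinset]
  exact ⟨this, he.2⟩

theorem aux_sum {n : ℕ} (G : SimpleGraph (Fin n)) [DecidableRel G.Adj]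
    (C : Finset (Sym2 (Fin n))) (hC : C ⊆ G.edgeFinset) :
    ∑ i, edgeDeg C i = 2 * C.card := by
  unfold edgeDeg
  simp_rw [Finset.card_filter]
  rw [Finset.sum_comm]
  have : ∀ e ∈ C, (∑ i : Fin n, if i ∈ e then 1 else 0) = 2 := by
    intro e he
    have h := hC he
    rw [SimpleGraph.mem_edgeFinset] at h
    induction e using Sym2.ind with
    | _ a b =>
      have hab : a ≠ b := G.ne_of_adj h
      rw [← Finset.card_filter]
      have : (univ.filter (fun i => i ∈ s(a, b))) = {a, b} := by
        ext i; simp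
      rw [this, Finset.card_pair hab]
  rw [Finset.sum_congr rfl this]
  simp [mul_comm]

theorem aux_pair {n : ℕ} (C : Finset (Sym2 (Fin n))) (a b : Fin n) (hab : a ≠ b) :
    edgeDeg C a + edgeDeg C b ≤ C.card + (if s(a, b) ∈ C then 1 else 0) := by
  unfold edgeDeg
  rw [← Finset.card_union_add_card_inter]
  apply Nat.add_le_add
  · apply Finset.card_le_card
    intro e he
    simp only [Finset.mem_union, Finset.mem_filter] at he
    tauto
  · have hm : ∀ e ∈ (C.filter (fun e => a ∈ e)) ∩ (C.filter (fun e => b ∈ e)),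
        e ∈ C ∧ e = s(a, b) := by
      intro e he
      simp only [Finset.mem_inter, Finset.mem_filter] at he
      exact ⟨he.1.1, (Sym2.mem_and_mem_iff hab).1 ⟨he.1.2, he.2.2⟩⟩
    split_ifs with h
    · rw [← Finset.card_singleton (s(a, b))]
      apply Finset.card_le_card
      intro e he
      simpa using (hm e he).2
    · rw [Nat.le_zero, Finset.card_eq_zero, Finset.eq_empty_iff_forall_notMem]
      intro e he
      obtain ⟨h1, h2⟩ := hm e he
      exact h (h2 ▸ h1)

theorem aux_excess {n : ℕ} (G : SimpleGraph (Fin n)) [DecidableRel G.Adj]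
    (htf : G.CliqueFree 3) (hdeg : ∀ v : Fin n, G.degree v ≤ 3)
    (C : Finset (Sym2 (Fin n))) (hC : C ⊆ G.edgeFinset)
    (hlt : ∀ v, edgeDeg C v < C.card) :
    3 * ∑ i, (2 * edgeDeg C i - C.card) ≤ 2 * C.card := by
  have h3 : ∀ v, edgeDeg C v ≤ 3 := fun v => (aux_deg_le G C hC v).trans (hdeg v)
  have hs := aux_sum G C hC
  have hadj : ∀ a b, a ≠ b → C.card < edgeDeg C a + edgeDeg C b → G.Adj a b := by
    intro a b hab h
    have := aux_pair C a b hab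
    split_ifs at this with hm
    · simpa using hC hm
    · omega
  have hp1 : ∀ a b, a ≠ b → edgeDeg C a + edgeDeg C b ≤ C.card + 1 := by
    intro a b hab
    have := aux_pair C a b hab
    split_ifs at this <;> omega
  generalize C.card = p at *
  generalize edgeDeg C = d at *
  by_cases h6 : 6 ≤ p ∨ p ≤ 2
  · have : ∑ i, (2 * d i - p) = 0 := by
      apply Finset.sum_eq_zero
      intro i _
      have := h3 i
      have := hlt i
      omega
    omega
  have hb : ∀ k m, (∀ i, 2 * d i - p ≤ if m ≤ d i then k else 0) →
      ∑ i, (2 * d i - p) ≤ (univ.filter (fun i => m ≤ d i)).card * k := by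
    intro k m h
    refine (Finset.sum_le_sum (fun i _ => h i)).trans ?_
    rw [← Finset.sum_filter]
    simp
  have hp : p = 3 ∨ p = 4 ∨ p = 5 := by omega
  rcases hp with rfl | rfl | rfl
  · have h := hb 1 2 (by intro i; have := hlt i; split_ifs <;> omega)
    have : (univ.filter (fun i => 2 ≤ d i)).card ≤ 2 := by
      by_contra hc
      rw [not_le, Finset.two_lt_card] at hc
      obtain ⟨a, ha, b, hb', c, hc', hab, hac, hbc⟩ := hc
      simp only [Finset.mem_filter, Finset.mem_univ, true_and] at ha hb' hc'
      exact htf {a, b, c} (SimpleGraph.is3Clique_triple_iff.2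
        ⟨hadj a b hab (by omega), hadj a c hac (by omega), hadj b c hbc (by omega)⟩)
    omega
  · have h := hb 2 3 (by intro i; have := h3 i; split_ifs <;> omega)
    have : (univ.filter (fun i => 3 ≤ d i)).card ≤ 1 := by
      by_contra hc
      rw [not_le, Finset.one_lt_card] at hc
      obtain ⟨a, ha, b, hb', hab⟩ := hc
      simp only [Finset.mem_filter, Finset.mem_univ, true_and] at ha hb'
      have := hp1 a b hab
      omega
    omega
  · have h := hb 1 3 (by intro i; have := h3 i; split_ifs <;> omega)
    have : (univ.filter (fun i => 3 ≤ d i)).card * 3 ≤ ∑ i, d i := by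
      calc _ = ∑ i ∈ univ.filter (fun i => 3 ≤ d i), 3 := by simp
        _ ≤ ∑ i ∈ univ.filter (fun i => 3 ≤ d i), d i :=
          Finset.sum_le_sum (fun i hi => (Finset.mem_filter.1 hi).2)
        _ ≤ _ := Finset.sum_le_sum_of_subset (Finset.subset_univ _)
    omega

theorem aux_coord {n : ℕ} (C : Finset (Sym2 (Fin n))) (i : Fin n) (t : ℝ) :
    min (edgeDeg C i : ℝ) ((C.card : ℝ) - edgeDeg C i) ≤ ∑ e ∈ C, |edgePoint e i - t| := by
  have hle : edgeDeg C i ≤ C.card := Finset.card_filter_le _ _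
  have hle' : (edgeDeg C i : ℝ) ≤ C.card := by exact_mod_cast hle
  have hc : (C.filter (fun e => ¬ i ∈ e)).card = (C.card : ℝ) - edgeDeg C i := by
    have := Finset.card_filter_add_card_filter_not (s := C) (fun e => i ∈ e)
    rw [← this]
    unfold edgeDeg
    push_cast
    ring
  have hsum : ∑ e ∈ C, |edgePoint e i - t|
      = (edgeDeg C i : ℝ) * |1 - t| + ((C.card : ℝ) - edgeDeg C i) * |t| := by
    rw [← Finset.sum_filter_add_sum_filter_not C (fun e => i ∈ e), ← hc]
    congr 1
    · rw [Finset.sum_congr rfl (g := fun _ => |1 - t|)]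
      · simp [edgeDeg]
      · intro e he
        simp [edgePoint, (Finset.mem_filter.1 he).2]
    · rw [Finset.sum_congr rfl (g := fun _ => |t|)]
      · simp
      · intro e he
        simp [edgePoint, (Finset.mem_filter.1 he).2]
  rw [hsum]
  set m := min (edgeDeg C i : ℝ) ((C.card : ℝ) - edgeDeg C i) with hm
  have h1 : m ≤ edgeDeg C i := min_le_left _ _
  have h2 : m ≤ (C.card : ℝ) - edgeDeg C i := min_le_right _ _
  have h0 : 0 ≤ m := le_min (by positivity) (by linarith)
  have ht : 1 ≤ |1 - t| + |t| := by
    have := le_abs_self (1 - t)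
    have := le_abs_self t
    linarith
  have e1 := mul_le_mul_of_nonneg_right h1 (abs_nonneg (1 - t))
  have e2 := mul_le_mul_of_nonneg_right h2 (abs_nonneg t)
  have e3 := mul_le_mul_of_nonneg_left ht h0
  linarith

theorem stmt_5 {n : ℕ} (G : SimpleGraph (Fin n)) [DecidableRel G.Adj]
    (htf : G.CliqueFree 3) (hdeg : ∀ v : Fin n, G.degree v ≤ 3)
    (C : Finset (Sym2 (Fin n))) (hC : C ⊆ G.edgeFinset)
    (p : ℕ) (hcard : C.card = p) (hne : C.Nonempty) (hnstar : ¬ IsStar C) :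
    (∑ i, min ((edgeDeg C i : ℝ)) ((p : ℝ) - (edgeDeg C i : ℝ)) ≥ (4 / 3 : ℝ) * p) ∧
    (∀ μ : Fin n → ℝ, ∑ e ∈ C, ∑ i, |edgePoint e i - μ i| ≥ (4 / 3 : ℝ) * p) := by
  subst hcard
  have hlt : ∀ v, edgeDeg C v < C.card := by
    intro v
    refine lt_of_le_of_ne (Finset.card_filter_le _ _) ?_
    intro h
    exact hnstar ⟨v, Finset.card_filter_eq_iff.1 h⟩
  have hex := aux_excess G htf hdeg C hC hlt
  have hs := aux_sum G C hC
  have hmin : ∀ i, min (edgeDeg C i : ℝ) ((C.card : ℝ) - edgeDeg C i)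
      = (edgeDeg C i : ℝ) - ((2 * edgeDeg C i - C.card : ℕ) : ℝ) := by
    intro i
    rcases le_total (2 * edgeDeg C i) C.card with h | h
    · have h' : 2 * (edgeDeg C i : ℝ) ≤ C.card := by exact_mod_cast h
      rw [Nat.sub_eq_zero_of_le h, min_eq_left (by linarith)]
      simp
    · have h' : (C.card : ℝ) ≤ 2 * (edgeDeg C i : ℝ) := by exact_mod_cast h
      rw [Nat.cast_sub h, min_eq_right (by linarith)]
      push_cast
      ring
  have hfirst : ∑ i, min ((edgeDeg C i : ℝ)) ((C.card : ℝ) - (edgeDeg C i : ℝ))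
      ≥ (4 / 3 : ℝ) * C.card := by
    rw [Finset.sum_congr rfl (fun i _ => hmin i), Finset.sum_sub_distrib,
      ← Nat.cast_sum, ← Nat.cast_sum, hs]
    have : (3 : ℝ) * ((∑ i, (2 * edgeDeg C i - C.card) : ℕ) : ℝ) ≤ 2 * (C.card : ℝ) := by
      exact_mod_cast hex
    push_cast at this ⊢
    linarith
  refine ⟨hfirst, fun μ => ?_⟩
  rw [Finset.sum_comm]
  exact hfirst.le.trans (Finset.sum_le_sum (fun i _ => aux_coord C i (μ i)))
end

section
/- Let G=(V,E) be a triangle-free graph with V={1,...,n} that has no vertex cover of size at most k. Then for every partition (C₁,...,C_k) of E into k groups, some group C_j contains two vertex-disjoint edges; consequently, for every choice of representatives μ₁,...,μ_k ∈ ℝ^n, the k-centers cost max_j max_{e∈C_j} ‖v^e − μ_j‖₂ is at least 1. -/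
open Finset

/-- `S` is a vertex cover of `G`: every edge has an endpoint in `S`. -/
def IsVertexCover {n : ℕ} (G : SimpleGraph (Fin n)) [DecidableRel G.Adj]
    (S : Finset (Fin n)) : Prop :=
  ∀ e ∈ G.edgeFinset, ∃ v ∈ S, v ∈ e

theorem common_vertex {n : ℕ} (G : SimpleGraph (Fin n)) (htf : G.CliqueFree 3)
    (C : Finset (Sym2 (Fin n))) (hC : ∀ e ∈ C, e ∈ G.edgeSet)
    (hint : ∀ e ∈ C, ∀ e' ∈ C, ∃ v, v ∈ e ∧ v ∈ e') :
    ∃ S : Finset (Fin n), S.card ≤ 1 ∧ ∀ e ∈ C, ∃ v ∈ S, v ∈ e := by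
  by_cases hne : C.Nonempty
  swap
  · rw [Finset.not_nonempty_iff_eq_empty] at hne
    exact ⟨∅, by simp, by simp [hne]⟩
  obtain ⟨e, he⟩ := hne
  by_contra hcon
  have key : ∀ v, ∃ e ∈ C, v ∉ e := by
    intro v
    by_contra h
    push Not at h
    exact hcon ⟨{v}, by simp, fun e he => ⟨v, by simp, h e he⟩⟩
  induction e using Sym2.ind with
  | _ a b =>
  obtain ⟨e1, he1, ha⟩ := key a
  obtain ⟨e2, he2, hb⟩ := key b
  have hb1 : b ∈ e1 := by
    obtain ⟨v, hv, hv'⟩ := hint _ he _ he1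
    rcases Sym2.mem_iff.1 hv with rfl | rfl
    · exact absurd hv' ha
    · exact hv'
  have ha2 : a ∈ e2 := by
    obtain ⟨v, hv, hv'⟩ := hint _ he _ he2
    rcases Sym2.mem_iff.1 hv with rfl | rfl
    · exact hv'
    · exact absurd hv' hb
  obtain ⟨c, rfl⟩ := hb1
  obtain ⟨v, hv, hv'⟩ := hint _ he1 _ he2
  rcases Sym2.mem_iff.1 hv with rfl | rfl
  · exact hb hv'
  have hac : a ≠ v := by
    rintro rfl
    exact ha hv
  have h2 : e2 = s(a, v) := (Sym2.mem_and_mem_iff hac).1 ⟨ha2, hv'⟩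
  subst h2
  have A1 : G.Adj a b := hC _ he
  have A2 : G.Adj b v := hC _ he1
  have A3 : G.Adj a v := hC _ he2
  exact htf {a, b, v} (SimpleGraph.is3Clique_triple_iff.2 ⟨A1, A3, A2⟩)

theorem sum_ge_four {n : ℕ} (G : SimpleGraph (Fin n)) (e e' : Sym2 (Fin n))
    (he : e ∈ G.edgeSet) (he' : e' ∈ G.edgeSet) (h : ∀ v, v ∈ e → v ∉ e') :
    (4 : ℝ) ≤ ∑ i, (edgePoint e i - edgePoint e' i) ^ 2 := by
  induction e using Sym2.ind with
  | _ a b =>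
  induction e' using Sym2.ind with
  | _ c d =>
  have A1 : a ≠ b := SimpleGraph.Adj.ne (G := G) he
  have A2 : c ≠ d := SimpleGraph.Adj.ne (G := G) he'
  have ha := h a (by simp)
  have hb := h b (by simp)
  simp only [Sym2.mem_iff, not_or] at ha hb
  obtain ⟨h1, h2⟩ := ha
  obtain ⟨h3, h4⟩ := hb
  calc (4 : ℝ) = ∑ i ∈ ({a, b, c, d} : Finset (Fin n)),
        (edgePoint s(a, b) i - edgePoint s(c, d) i) ^ 2 := by
        rw [Finset.sum_insert (by simp [*]), Finset.sum_insert (by simp [*]),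
          Finset.sum_insert (by simp [*]), Finset.sum_singleton]
        simp [edgePoint, h1, h2, h3, h4, Ne.symm h1, Ne.symm h2, Ne.symm h3, Ne.symm h4]
        norm_num
    _ ≤ _ := Finset.sum_le_sum_of_subset_of_nonneg (Finset.subset_univ _)
        (fun i _ _ => sq_nonneg _)

theorem stmt_12 {n : ℕ} (G : SimpleGraph (Fin n)) [DecidableRel G.Adj]
    (htf : G.CliqueFree 3)
    (k : ℕ) (hnocover : ¬ ∃ S : Finset (Fin n), IsVertexCover G S ∧ S.card ≤ k)
    (C : Fin k → Finset (Sym2 (Fin n)))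
    (hdisj : ∀ j j' : Fin k, j ≠ j' → Disjoint (C j) (C j'))
    (hunion : G.edgeFinset = Finset.univ.biUnion C) :
    (∃ j : Fin k, ∃ e ∈ C j, ∃ e' ∈ C j, ∀ v : Fin n, v ∈ e → v ∉ e') ∧
    (∀ μ : Fin k → (Fin n → ℝ),
      ∃ j : Fin k, ∃ e ∈ C j, Real.sqrt (∑ i, (edgePoint e i - μ j i) ^ 2) ≥ 1) := by
  have hE : ∀ j, ∀ e ∈ C j, e ∈ G.edgeSet := by
    intro j e he
    rw [← SimpleGraph.mem_edgeFinset, hunion]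
    exact Finset.mem_biUnion.2 ⟨j, Finset.mem_univ _, he⟩
  have h1 : ∃ j : Fin k, ∃ e ∈ C j, ∃ e' ∈ C j, ∀ v : Fin n, v ∈ e → v ∉ e' := by
    by_contra hcon
    push Not at hcon
    choose S hS hS' using fun j => common_vertex G htf (C j) (hE j) (hcon j)
    refine hnocover ⟨Finset.univ.biUnion S, ?_, ?_⟩
    · intro e he
      rw [hunion] at he
      obtain ⟨j, _, hj⟩ := Finset.mem_biUnion.1 he
      obtain ⟨v, hv, hve⟩ := hS' j e hj
      exact ⟨v, Finset.mem_biUnion.2 ⟨j, Finset.mem_univ _, hv⟩, hve⟩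
    · simpa using Finset.card_biUnion_le_card_mul Finset.univ S 1 (fun j _ => hS j)
  refine ⟨h1, fun μ => ?_⟩
  obtain ⟨j, e, he, e', he', hd⟩ := h1
  have h4 := sum_ge_four G e e' (hE j e he) (hE j e' he') hd
  have hle : ∑ i, (edgePoint e i - edgePoint e' i) ^ 2 ≤
      2 * ∑ i, (edgePoint e i - μ j i) ^ 2 + 2 * ∑ i, (edgePoint e' i - μ j i) ^ 2 := by
    rw [Finset.mul_sum, Finset.mul_sum, ← Finset.sum_add_distrib]
    refine Finset.sum_le_sum fun i _ => ?_
    nlinarith [sq_nonneg ((edgePoint e i - μ j i) + (edgePoint e' i - μ j i))]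
  by_cases hc : 1 ≤ ∑ i, (edgePoint e i - μ j i) ^ 2
  · exact ⟨j, e, he, Real.one_le_sqrt.2 hc⟩
  · exact ⟨j, e', he', Real.one_le_sqrt.2 (by linarith)⟩
end

section
/- Let G=(V,E) be a graph with V={1,...,n} in which every vertex has degree at most 3, and let S={i₁ < ... < i_k} be a vertex cover of G such that each group E_j = {e ∈ E : i_j is incident to e and no i_{j'} with j' < j is incident to e} is nonempty. Taking the mean μ(E_j) of {v^e : e ∈ E_j} as the representative of E_j, every point v^e with e ∈ E_j satisfies ‖v^e − μ(E_j)‖₂ = √(1 − 1/|E_j|) ≤ √(2/3); hence the k-centers cost of the partition (E₁,...,E_k) is at most √(2/3). -/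
open Finset

lemma starCluster_arith (m : ℝ) (hm : m ≠ 0) :
    1 - 2 / m + m * (1 / m ^ 2) = 1 - 1 / m := by
  field_simp
  ring

lemma starCluster_sum {n : ℕ} (C : Finset (Sym2 (Fin n))) (c : Fin n)
    (hc : ∀ e ∈ C, c ∈ e) (hd : ∀ e ∈ C, ¬ e.IsDiag) (e : Sym2 (Fin n)) (he : e ∈ C) :
    ∑ i, (edgePoint e i - clusterMean C i) ^ 2 = 1 - 1 / (C.card : ℝ) := by
  classical
  set N : Finset (Fin n) := Finset.univ.filter (fun i => s(c, i) ∈ C) with hN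
  have hcN : c ∉ N := by
    intro h
    have h1 : s(c, c) ∈ C := by simpa [hN] using h
    exact hd _ h1 (by simp)
  have hCN : C = N.image (fun i => s(c, i)) := by
    ext x
    simp only [Finset.mem_image, hN, Finset.mem_filter, Finset.mem_univ, true_and]
    constructor
    · intro hx
      obtain ⟨y, rfl⟩ := hc x hx
      exact ⟨y, hx, rfl⟩
    · rintro ⟨y, hy, rfl⟩
      exact hy
  have hinj : Function.Injective (fun i : Fin n => s(c, i)) := by
    intro a b h
    exact Sym2.congr_right.mp h
  have hcard : C.card = N.card := by
    rw [hCN, Finset.card_image_of_injective _ hinj]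
  have hpos : (0 : ℝ) < C.card := by
    exact_mod_cast Finset.card_pos.mpr ⟨e, he⟩
  have hsum : ∀ i, ∑ x ∈ C, edgePoint x i = if i = c then (C.card : ℝ) else
      if i ∈ N then 1 else 0 := by
    intro i
    by_cases hi : i = c
    · subst hi
      rw [if_pos rfl, Finset.sum_congr rfl (g := fun _ => (1 : ℝ))]
      · simp
      · intro x hx
        simp [edgePoint, hc x hx]
    · rw [if_neg hi, hCN, Finset.sum_image (fun a _ b _ h => hinj h)]
      simp [edgePoint, Sym2.mem_iff, hi]
  obtain ⟨w, rfl⟩ := hc e he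
  have hw : w ∈ N := by simpa [hN] using he
  have hterm : ∀ i, (edgePoint s(c, w) i - clusterMean C i) ^ 2 =
      if i ∈ N then ((if i = w then (1 - 2 / (C.card : ℝ)) else 0) + 1 / (C.card : ℝ) ^ 2)
      else 0 := by
    intro i
    unfold clusterMean
    rw [hsum i]
    by_cases hi : i = c
    · subst hi
      simp [edgePoint, hcN, hpos.ne']
    · by_cases hiw : i = w
      · subst hiw
        simp only [edgePoint, Sym2.mem_iff, hi, hw, if_true, if_false, or_true]
        ring
      · by_cases hiN : i ∈ N <;> simp [edgePoint, Sym2.mem_iff, hi, hiw, hiN]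
  rw [Finset.sum_congr rfl (fun i _ => hterm i), ← Finset.sum_filter]
  rw [Finset.filter_mem_eq_inter, Finset.univ_inter, Finset.sum_add_distrib,
    Finset.sum_ite_eq' N w, if_pos hw, Finset.sum_const, ← hcard, nsmul_eq_mul]
  exact starCluster_arith _ hpos.ne'

theorem stmt_13 {n k : ℕ} (G : SimpleGraph (Fin n)) [DecidableRel G.Adj]
    (hdeg : ∀ v : Fin n, G.degree v ≤ 3)
    (f : Fin k → Fin n) (hmono : StrictMono f)
    (hcover : ∀ e ∈ G.edgeFinset, ∃ j : Fin k, f j ∈ e)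
    (E : Fin k → Finset (Sym2 (Fin n)))
    (hE : ∀ j : Fin k,
      E j = G.edgeFinset.filter (fun e => f j ∈ e ∧ ∀ j' : Fin k, j' < j → f j' ∉ e))
    (hne : ∀ j : Fin k, (E j).Nonempty) :
    ∀ j : Fin k, ∀ e ∈ E j,
      Real.sqrt (∑ i, (edgePoint e i - clusterMean (E j) i) ^ 2)
        = Real.sqrt (1 - 1 / ((E j).card : ℝ)) ∧
      Real.sqrt (∑ i, (edgePoint e i - clusterMean (E j) i) ^ 2)
        ≤ Real.sqrt (2 / 3) := by
  intro j e he
  have hc : ∀ x ∈ E j, f j ∈ x := by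
    intro x hx
    rw [hE] at hx
    exact (Finset.mem_filter.mp hx).2.1
  have hG : ∀ x ∈ E j, x ∈ G.edgeFinset := by
    intro x hx
    rw [hE] at hx
    exact (Finset.mem_filter.mp hx).1
  have hd : ∀ x ∈ E j, ¬ x.IsDiag := fun x hx =>
    G.not_isDiag_of_mem_edgeSet (SimpleGraph.mem_edgeFinset.mp (hG x hx))
  have hle : (E j).card ≤ 3 := by
    refine le_trans ?_ (hdeg (f j))
    rw [← SimpleGraph.card_incidenceFinset_eq_degree]
    apply Finset.card_le_card
    intro x hx
    rw [SimpleGraph.mem_incidenceFinset]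
    exact ⟨SimpleGraph.mem_edgeFinset.mp (hG x hx), hc x hx⟩
  have hpos : (0 : ℝ) < (E j).card := by
    exact_mod_cast Finset.card_pos.mpr ⟨e, he⟩
  have hle' : ((E j).card : ℝ) ≤ 3 := by exact_mod_cast hle
  rw [starCluster_sum (E j) (f j) hc hd e he]
  refine ⟨rfl, Real.sqrt_le_sqrt ?_⟩
  have := one_div_le_one_div_of_le hpos hle'
  linarith
end

section
/- Let X be a finite set of points in ℝ^d, let dist : X × X → ℝ₊ be a function, and for each j let d*_j denote the maximum spacing over all partitions of X into j+1 nonempty groups induced by the leaves of a standard axis-aligned decision tree with j+1 leaves. Let L be a partition of X into i+1 nonempty groups induced by a standard decision tree, with i+2 ≤ |X|, such that sp(L) = d*_i. Then there exist a group ℓ ∈ L and an axis-aligned cut γ = (coordinate, threshold) splitting the points of ℓ into two nonempty sets such that the partition L_{γ,ℓ} obtained from L by replacing ℓ with these two sets satisfies sp(L_{γ,ℓ}) ≥ d*_{i+1}; moreover L_{γ,ℓ} is induced by a standard decision tree with i+2 leaves. -/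
open Finset
open scoped Classical

/-- A standard (axis-aligned) decision tree over `ℝ^d`: each internal node is labeled
by a coordinate and a threshold. -/
inductive DTree (d : ℕ) where
  | leaf : DTree d
  | node (i : Fin d) (θ : ℝ) (l r : DTree d) : DTree d

/-- The cells (regions of `ℝ^d`) associated with the leaves of a decision tree:
a point reaching a node goes left if its labeled coordinate is `≤` the threshold,
and right otherwise. -/
def DTree.cells {d : ℕ} : DTree d → List (Set (Fin d → ℝ))
  | .leaf => [Set.univ]
  | .node i θ l r =>
      (l.cells.map fun c => {x : Fin d → ℝ | x i ≤ θ} ∩ c) ++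
      (r.cells.map fun c => {x : Fin d → ℝ | θ < x i} ∩ c)

/-- The groups of points of `X` reaching each leaf of the tree `t`. -/
noncomputable def inducedGroups {d : ℕ} (X : Finset (Fin d → ℝ)) (t : DTree d) :
    List (Finset (Fin d → ℝ)) :=
  t.cells.map fun c => X.filter (· ∈ c)

/-- `P` is a partition of `X` into `m` nonempty groups induced by the leaves of a
standard axis-aligned decision tree with `m` leaves (an explainable partition). -/
noncomputable def IsExplainablePartition {d : ℕ} (X : Finset (Fin d → ℝ)) (m : ℕ)
    (P : Finset (Finset (Fin d → ℝ))) : Prop :=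
  ∃ t : DTree d, t.cells.length = m ∧ (∀ s ∈ inducedGroups X t, s.Nonempty) ∧
    P = (inducedGroups X t).toFinset

/-- The spacing of a partition `P` with respect to a distance function `dist`. -/
noncomputable def spacing {α : Type*} (dist : α → α → ℝ) (P : Finset (Finset α)) : ℝ :=
  sInf {r : ℝ | ∃ s ∈ P, ∃ s' ∈ P, s ≠ s' ∧ ∃ x ∈ s, ∃ y ∈ s', r = dist x y}

/-- The maximum spacing over all explainable partitions of `X` into `m` nonempty groups. -/
noncomputable def maxSpacing {d : ℕ} (X : Finset (Fin d → ℝ))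
    (dist : (Fin d → ℝ) → (Fin d → ℝ) → ℝ) (m : ℕ) : ℝ :=
  sSup {r : ℝ | ∃ P : Finset (Finset (Fin d → ℝ)),
    IsExplainablePartition X m P ∧ r = spacing dist P}

lemma groups_leaf {d : ℕ} (X : Finset (Fin d → ℝ)) :
    inducedGroups X (DTree.leaf) = [X] := by
  simp [inducedGroups, DTree.cells]

lemma groups_node {d : ℕ} (X : Finset (Fin d → ℝ)) (i : Fin d) (θ : ℝ) (l r : DTree d) :
    inducedGroups X (DTree.node i θ l r) =
      inducedGroups (X.filter fun x => x i ≤ θ) l ++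
      inducedGroups (X.filter fun x => θ < x i) r := by
  simp only [inducedGroups, DTree.cells, List.map_append, List.map_map]
  congr 1 <;>
  · apply List.map_congr_left
    intro c _
    ext x
    simp [and_assoc]

lemma groups_length {d : ℕ} (X : Finset (Fin d → ℝ)) (t : DTree d) :
    (inducedGroups X t).length = t.cells.length := by
  simp [inducedGroups]

lemma groups_subset {d : ℕ} (X : Finset (Fin d → ℝ)) (t : DTree d) :
    ∀ s ∈ inducedGroups X t, s ⊆ X := by
  intro s hs
  simp only [inducedGroups, List.mem_map] at hs
  obtain ⟨c, _, rfl⟩ := hs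
  exact Finset.filter_subset _ _

lemma groups_cover {d : ℕ} (t : DTree d) : ∀ (X : Finset (Fin d → ℝ)),
    ∀ x ∈ X, ∃ s ∈ inducedGroups X t, x ∈ s := by
  induction t with
  | leaf => intro X x hx; exact ⟨X, by simp [groups_leaf], hx⟩
  | node i θ l r ihl ihr =>
    intro X x hx
    rw [groups_node]
    rcases le_or_gt (x i) θ with h | h
    · obtain ⟨s, hs, hxs⟩ := ihl (X.filter fun x => x i ≤ θ) x (by simp [hx, h])
      exact ⟨s, List.mem_append_left _ hs, hxs⟩
    · obtain ⟨s, hs, hxs⟩ := ihr (X.filter fun x => θ < x i) x (by simp [hx, h])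
      exact ⟨s, List.mem_append_right _ hs, hxs⟩

lemma groups_disjoint {d : ℕ} (t : DTree d) : ∀ (X : Finset (Fin d → ℝ)),
    (inducedGroups X t).Pairwise Disjoint := by
  induction t with
  | leaf => intro X; simp [groups_leaf]
  | node i θ l r ihl ihr =>
    intro X
    rw [groups_node, List.pairwise_append]
    refine ⟨ihl _, ihr _, ?_⟩
    intro a ha b hb
    rw [Finset.disjoint_left]
    intro x hxa hxb
    have h1 := groups_subset _ _ a ha hxa
    have h2 := groups_subset _ _ b hb hxb
    simp only [Finset.mem_filter] at h1 h2
    linarith [h1.2, h2.2]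

lemma groups_eq {d : ℕ} (X : Finset (Fin d → ℝ)) (t : DTree d)
    {s s' : Finset (Fin d → ℝ)} (hs : s ∈ inducedGroups X t) (hs' : s' ∈ inducedGroups X t)
    {x : Fin d → ℝ} (hx : x ∈ s) (hx' : x ∈ s') : s = s' := by
  by_contra hne
  have h : ∀ ⦃a⦄, a ∈ inducedGroups X t → ∀ ⦃b⦄, b ∈ inducedGroups X t → a ≠ b → Disjoint a b :=
    fun a ha b hb hab => (groups_disjoint t X).forall ha hb hab
  exact Finset.disjoint_left.1 (h hs hs' hne) hx hx'

lemma groups_nodup {d : ℕ} (X : Finset (Fin d → ℝ)) (t : DTree d)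
    (hne : ∀ s ∈ inducedGroups X t, s.Nonempty) : (inducedGroups X t).Nodup := by
  refine List.Pairwise.imp_of_mem ?_ (groups_disjoint t X)
  intro a b ha hb hab h
  subst h
  obtain ⟨x, hx⟩ := hne a ha
  exact Finset.disjoint_left.1 hab hx hx

lemma groups_refine {d : ℕ} (t : DTree d) (c : Fin d) (θ : ℝ) (ℓ : Finset (Fin d → ℝ)) :
    ∀ (X : Finset (Fin d → ℝ)), ℓ ∈ inducedGroups X t →
    ∃ t' A B, inducedGroups X t = A ++ ℓ :: B ∧ inducedGroups X t' =
      A ++ (ℓ.filter fun x => x c ≤ θ) :: (ℓ.filter fun x => θ < x c) :: B := by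
  induction t with
  | leaf =>
    intro X h
    simp only [groups_leaf, List.mem_singleton] at h
    subst h
    exact ⟨.node c θ .leaf .leaf, [], [], by simp [groups_leaf], by simp [groups_node, groups_leaf]⟩
  | node i η l r ihl ihr =>
    intro X h
    rw [groups_node, List.mem_append] at h
    rcases h with h | h
    · obtain ⟨t', A, B, h1, h2⟩ := ihl _ h
      exact ⟨.node i η t' r, A, B ++ inducedGroups (X.filter fun x => η < x i) r,
        by rw [groups_node, h1]; simp, by rw [groups_node, h2]; simp⟩
    · obtain ⟨t', A, B, h1, h2⟩ := ihr _ h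
      exact ⟨.node i η l t', inducedGroups (X.filter fun x => x i ≤ η) l ++ A, B,
        by rw [groups_node, h1]; simp, by rw [groups_node, h2]; simp⟩

lemma groups_contract {d : ℕ} (t : DTree d) :
    t = .leaf ∨ ∀ (X : Finset (Fin d → ℝ)),
    ∃ t' A B s₁ s₂, inducedGroups X t = A ++ s₁ :: s₂ :: B ∧ inducedGroups X t' =
      A ++ (s₁ ∪ s₂) :: B := by
  induction t with
  | leaf => exact Or.inl rfl
  | node i η l r ihl ihr =>
    right
    intro X
    rcases ihl with rfl | ihl
    · rcases ihr with rfl | ihr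
      · refine ⟨.leaf, [], [], X.filter fun x => x i ≤ η, X.filter fun x => η < x i, ?_, ?_⟩
        · simp [groups_node, groups_leaf]
        · rw [groups_leaf, ← Finset.filter_or]
          simp [le_or_gt]
      · obtain ⟨t', A, B, s₁, s₂, h1, h2⟩ := ihr (X.filter fun x => η < x i)
        exact ⟨.node i η .leaf t', inducedGroups (X.filter fun x => x i ≤ η) .leaf ++ A, B, s₁, s₂,
          by rw [groups_node, h1]; simp, by rw [groups_node, h2]; simp⟩
    · obtain ⟨t', A, B, s₁, s₂, h1, h2⟩ := ihl (X.filter fun x => x i ≤ η)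
      exact ⟨.node i η t' r, A, B ++ inducedGroups (X.filter fun x => η < x i) r, s₁, s₂,
        by rw [groups_node, h1]; simp, by rw [groups_node, h2]; simp⟩

lemma groups_split {d : ℕ} (t : DTree d) (S : Finset (Fin d → ℝ)) :
    ∀ (X : Finset (Fin d → ℝ)), S ⊆ X → (¬ ∃ g ∈ inducedGroups X t, S ⊆ g) →
    ∃ (c : Fin d) (θ : ℝ), (S.filter fun x => x c ≤ θ).Nonempty ∧
      (S.filter fun x => θ < x c).Nonempty ∧
      ∀ x ∈ S, ∀ y ∈ S, x c ≤ θ → θ < y c →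
        ∃ g ∈ inducedGroups X t, ∃ g' ∈ inducedGroups X t, g ≠ g' ∧ x ∈ g ∧ y ∈ g' := by
  induction t with
  | leaf =>
    intro X hS h
    exact absurd ⟨X, by simp [groups_leaf], hS⟩ h
  | node i η l r ihl ihr =>
    intro X hS h
    rw [groups_node] at h ⊢
    by_cases h1 : (S.filter fun x => x i ≤ η).Nonempty
    · by_cases h2 : (S.filter fun x => η < x i).Nonempty
      · refine ⟨i, η, h1, h2, ?_⟩
        intro x hx y hy hxi hyi
        obtain ⟨g, hg, hxg⟩ := groups_cover l (X.filter fun x => x i ≤ η) x (by simp [hS hx, hxi])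
        obtain ⟨g', hg', hyg⟩ := groups_cover r (X.filter fun x => η < x i) y
          (by simp [hS hy, hyi])
        refine ⟨g, List.mem_append_left _ hg, g', List.mem_append_right _ hg', ?_, hxg, hyg⟩
        rintro rfl
        have := groups_subset _ _ _ hg' hxg
        simp only [Finset.mem_filter] at this
        linarith [this.2]
      · obtain ⟨c, θ, ha, hb, hc⟩ := ihl (X.filter fun x => x i ≤ η)
          (by
            intro x hx
            simp only [Finset.mem_filter]
            refine ⟨hS hx, ?_⟩
            by_contra hn
            exact h2 ⟨x, by simp [hx]; linarith⟩)
          (by rintro ⟨g, hg, hSg⟩; exact h ⟨g, List.mem_append_left _ hg, hSg⟩)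
        refine ⟨c, θ, ha, hb, fun x hx y hy h3 h4 => ?_⟩
        obtain ⟨g, hg, g', hg', h5⟩ := hc x hx y hy h3 h4
        exact ⟨g, List.mem_append_left _ hg, g', List.mem_append_left _ hg', h5⟩
    · obtain ⟨c, θ, ha, hb, hc⟩ := ihr (X.filter fun x => η < x i)
          (by
            intro x hx
            simp only [Finset.mem_filter]
            refine ⟨hS hx, ?_⟩
            by_contra hn
            exact h1 ⟨x, by simp [hx]; linarith⟩)
          (by rintro ⟨g, hg, hSg⟩; exact h ⟨g, List.mem_append_right _ hg, hSg⟩)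
      refine ⟨c, θ, ha, hb, fun x hx y hy h3 h4 => ?_⟩
      obtain ⟨g, hg, g', hg', h5⟩ := hc x hx y hy h3 h4
      exact ⟨g, List.mem_append_right _ hg, g', List.mem_append_right _ hg', h5⟩

lemma spacing_le {α : Type*} (dist : α → α → ℝ) (hdist : ∀ x y, 0 ≤ dist x y)
    {P : Finset (Finset α)} {s s' : Finset α} (hs : s ∈ P) (hs' : s' ∈ P) (hne : s ≠ s')
    {x y : α} (hx : x ∈ s) (hy : y ∈ s') : spacing dist P ≤ dist x y := by
  apply csInf_le
  · refine ⟨0, ?_⟩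
    rintro r ⟨_, _, _, _, _, _, _, _, _, rfl⟩
    exact hdist _ _
  · exact ⟨s, hs, s', hs', hne, x, hx, y, hy, rfl⟩

lemma le_spacing {α : Type*} (dist : α → α → ℝ)
    {P : Finset (Finset α)} {s s' : Finset α} (hs : s ∈ P) (hs' : s' ∈ P) (hne : s ≠ s')
    (hsn : s.Nonempty) (hsn' : s'.Nonempty) (M : ℝ)
    (h : ∀ s ∈ P, ∀ s' ∈ P, s ≠ s' → ∀ x ∈ s, ∀ y ∈ s', M ≤ dist x y) :
    M ≤ spacing dist P := by
  apply le_csInf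
  · obtain ⟨x, hx⟩ := hsn
    obtain ⟨y, hy⟩ := hsn'
    exact ⟨_, s, hs, s', hs', hne, x, hx, y, hy, rfl⟩
  · rintro r ⟨s, hs, s', hs', hne, x, hx, y, hy, rfl⟩
    exact h s hs s' hs' hne x hx y hy

lemma maxSet_finite {d : ℕ} (X : Finset (Fin d → ℝ))
    (dist : (Fin d → ℝ) → (Fin d → ℝ) → ℝ) (m : ℕ) :
    {r : ℝ | ∃ P : Finset (Finset (Fin d → ℝ)),
      IsExplainablePartition X m P ∧ r = spacing dist P}.Finite := by
  apply (X.powerset.powerset.image (spacing dist)).finite_toSet.subset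
  rintro r ⟨P, ⟨t, _, _, rfl⟩, rfl⟩
  simp only [Finset.coe_image, Set.mem_image, Finset.mem_coe, Finset.mem_powerset]
  refine ⟨_, ?_, rfl⟩
  intro s hs
  exact Finset.mem_powerset.2 (groups_subset X t s (List.mem_toFinset.1 hs))

lemma refine_explainable {d : ℕ} (X : Finset (Fin d → ℝ)) (m : ℕ)
    (L : Finset (Finset (Fin d → ℝ))) (hL : IsExplainablePartition X m L)
    (ℓ : Finset (Fin d → ℝ)) (hℓ : ℓ ∈ L) (c : Fin d) (θ : ℝ)
    (h1 : (ℓ.filter fun x => x c ≤ θ).Nonempty) (h2 : (ℓ.filter fun x => θ < x c).Nonempty) :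
    IsExplainablePartition X (m + 1)
        (insert (ℓ.filter fun x => x c ≤ θ)
          (insert (ℓ.filter fun x => θ < x c) (L.erase ℓ))) := by
  obtain ⟨t, ht, hne, rfl⟩ := hL
  obtain ⟨t', A, B, hA, hB⟩ := groups_refine t c θ ℓ X (List.mem_toFinset.1 hℓ)
  have hnd := groups_nodup X t hne
  rw [← groups_length X, hA] at ht
  rw [hA] at hne hnd
  refine ⟨t', ?_, ?_, ?_⟩
  · rw [← groups_length X, hB]
    simp at ht ⊢
    omega
  · rw [hB]
    intro s hs
    simp only [List.mem_append, List.mem_cons] at hs hne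
    rcases hs with h | rfl | rfl | h
    · exact hne s (Or.inl h)
    · exact h1
    · exact h2
    · exact hne s (Or.inr (Or.inr h))
  · rw [hA, hB]
    have hnA : ∀ a ∈ A, a ≠ ℓ := by
      rw [List.nodup_append] at hnd
      exact fun a ha => hnd.2.2 a ha ℓ (by simp)
    have hnB : ∀ a ∈ B, a ≠ ℓ := by
      rw [List.nodup_append, List.nodup_cons] at hnd
      rintro a ha rfl
      exact hnd.2.1.1 ha
    ext s
    simp only [Finset.mem_insert, Finset.mem_erase, List.mem_toFinset, List.mem_append,
      List.mem_cons]
    have := hnA s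
    have := hnB s
    tauto

lemma contract_spacing {d : ℕ} (X : Finset (Fin d → ℝ))
    (dist : (Fin d → ℝ) → (Fin d → ℝ) → ℝ) (hdist : ∀ x y, 0 ≤ dist x y) (m : ℕ) (hm : 2 ≤ m)
    (P : Finset (Finset (Fin d → ℝ))) (hP : IsExplainablePartition X (m + 1) P) :
    ∃ Q, IsExplainablePartition X m Q ∧ spacing dist P ≤ spacing dist Q := by
  obtain ⟨t, ht, hne, rfl⟩ := hP
  rcases groups_contract t with rfl | h
  · simp [DTree.cells] at ht
    omega
  obtain ⟨t', A, B, s₁, s₂, hA, hB⟩ := h X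
  have hlen : (inducedGroups X t').length = m := by
    rw [← groups_length X, hA] at ht
    rw [hB]
    simp at ht ⊢
    omega
  have hne' : ∀ s ∈ inducedGroups X t', s.Nonempty := by
    rw [hB]
    rw [hA] at hne
    intro s hs
    simp only [List.mem_append, List.mem_cons] at hs hne
    rcases hs with h | rfl | h
    · exact hne s (Or.inl h)
    · exact (hne s₁ (by simp)).mono Finset.subset_union_left
    · exact hne s (by simp [h])
  have hcard : 1 < (inducedGroups X t').toFinset.card := by
    rw [List.toFinset_card_of_nodup (groups_nodup X t' hne'), hlen]
    omega
  refine ⟨_, ⟨t', by rw [← groups_length X, hlen], hne', rfl⟩, ?_⟩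
  obtain ⟨a, ha, b, hb, hab⟩ := Finset.one_lt_card.1 hcard
  have key : ∀ s ∈ inducedGroups X t', ∀ x ∈ s, ∃ s0 ∈ inducedGroups X t, x ∈ s0 ∧ s0 ⊆ s := by
    rw [hA, hB]
    intro s hs x hx
    simp only [List.mem_append, List.mem_cons] at hs
    rcases hs with h | rfl | h
    · exact ⟨s, by simp [h], hx, subset_rfl⟩
    · rcases Finset.mem_union.1 hx with h | h
      · exact ⟨s₁, by simp, h, Finset.subset_union_left⟩
      · exact ⟨s₂, by simp, h, Finset.subset_union_right⟩
    · exact ⟨s, by simp [h], hx, subset_rfl⟩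
  refine le_spacing dist ha hb hab (hne' _ (List.mem_toFinset.1 ha))
    (hne' _ (List.mem_toFinset.1 hb)) _ ?_
  intro s hs s' hs' hss x hx y hy
  rw [List.mem_toFinset] at hs hs'
  obtain ⟨u, hu, hxu, hus⟩ := key s hs x hx
  obtain ⟨v, hv, hyv, hvs⟩ := key s' hs' y hy
  refine spacing_le dist hdist (List.mem_toFinset.2 hu) (List.mem_toFinset.2 hv) ?_ hxu hyv
  rintro rfl
  exact hss (groups_eq X t' hs hs' hx (hvs hxu))

lemma final_spacing {d : ℕ} (X : Finset (Fin d → ℝ))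
    (dist : (Fin d → ℝ) → (Fin d → ℝ) → ℝ)
    (L : Finset (Finset (Fin d → ℝ)))
    (ℓ : Finset (Fin d → ℝ)) (hℓ : ℓ ∈ L) (c : Fin d) (θ : ℝ)
    (h1 : (ℓ.filter fun x => x c ≤ θ).Nonempty) (h2 : (ℓ.filter fun x => θ < x c).Nonempty)
    (M : ℝ) (hM : ∀ s ∈ L, ∀ s' ∈ L, s ≠ s' → ∀ x ∈ s, ∀ y ∈ s', M ≤ dist x y)
    (hM' : ∀ x ∈ ℓ, ∀ y ∈ ℓ, x c ≤ θ → θ < y c → M ≤ dist x y ∧ M ≤ dist y x) :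
    M ≤ spacing dist (insert (ℓ.filter fun x => x c ≤ θ)
          (insert (ℓ.filter fun x => θ < x c) (L.erase ℓ))) := by
  refine le_spacing dist (s := ℓ.filter fun x => x c ≤ θ) (s' := ℓ.filter fun x => θ < x c)
    (by simp) (by simp) ?_ h1 h2 M ?_
  · intro h
    obtain ⟨x, hx⟩ := h1
    have hx' := hx
    rw [h] at hx'
    simp only [Finset.mem_filter] at hx hx'
    linarith [hx.2, hx'.2]
  · intro s hs s' hs' hne x hx y hy
    simp only [Finset.mem_insert, Finset.mem_erase] at hs hs'
    rcases hs with rfl | rfl | hs <;> rcases hs' with rfl | rfl | hs' <;>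
      try simp only [Finset.mem_filter] at hx hy
    · exact absurd rfl hne
    · exact (hM' x hx.1 y hy.1 hx.2 hy.2).1
    · exact hM ℓ hℓ s' hs'.2 (Ne.symm hs'.1) x hx.1 y hy
    · exact (hM' y hy.1 x hx.1 hy.2 hx.2).2
    · exact absurd rfl hne
    · exact hM ℓ hℓ s' hs'.2 (Ne.symm hs'.1) x hx.1 y hy
    · exact hM s hs.2 ℓ hℓ hs.1 x hx y hy.1
    · exact hM s hs.2 ℓ hℓ hs.1 x hx y hy.1
    · exact hM s hs.2 s' hs'.2 hne x hx y hy

theorem stmt_16 {d : ℕ} (X : Finset (Fin d → ℝ))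
    (dist : (Fin d → ℝ) → (Fin d → ℝ) → ℝ) (hdist : ∀ x y, 0 ≤ dist x y)
    (i : ℕ) (hcard : i + 2 ≤ X.card)
    (L : Finset (Finset (Fin d → ℝ)))
    (hL : IsExplainablePartition X (i + 1) L)
    (hopt : spacing dist L = maxSpacing X dist (i + 1)) :
    ∃ ℓ ∈ L, ∃ c : Fin d, ∃ θ : ℝ,
      (ℓ.filter fun x => x c ≤ θ).Nonempty ∧
      (ℓ.filter fun x => θ < x c).Nonempty ∧
      spacing dist
          (insert (ℓ.filter fun x => x c ≤ θ)
            (insert (ℓ.filter fun x => θ < x c) (L.erase ℓ)))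
        ≥ maxSpacing X dist (i + 2) ∧
      IsExplainablePartition X (i + 2)
        (insert (ℓ.filter fun x => x c ≤ θ)
          (insert (ℓ.filter fun x => θ < x c) (L.erase ℓ))) := by
  have hLcard : L.card ≤ i + 1 := by
    obtain ⟨t, ht, _, rfl⟩ := hL
    rw [← ht, ← groups_length X]
    exact List.toFinset_card_le _
  have hcov : ∀ x ∈ X, ∃ s ∈ L, x ∈ s := by
    obtain ⟨t, ht, _, rfl⟩ := hL
    simpa using groups_cover t X
  have hsub : ∀ s ∈ L, s ⊆ X := by
    obtain ⟨t, ht, _, rfl⟩ := hL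
    simpa using groups_subset X t
  suffices h : ∃ ℓ ∈ L, ∃ c : Fin d, ∃ θ : ℝ,
      (ℓ.filter fun x => x c ≤ θ).Nonempty ∧ (ℓ.filter fun x => θ < x c).Nonempty ∧
      (∀ s ∈ L, ∀ s' ∈ L, s ≠ s' → ∀ x ∈ s, ∀ y ∈ s', maxSpacing X dist (i + 2) ≤ dist x y) ∧
      (∀ x ∈ ℓ, ∀ y ∈ ℓ, x c ≤ θ → θ < y c →
        maxSpacing X dist (i + 2) ≤ dist x y ∧ maxSpacing X dist (i + 2) ≤ dist y x) by
    obtain ⟨ℓ, hℓ, c, θ, h1, h2, h3, h4⟩ := h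
    exact ⟨ℓ, hℓ, c, θ, h1, h2, final_spacing X dist L ℓ hℓ c θ h1 h2 _ h3 h4,
      refine_explainable X (i + 1) L hL ℓ hℓ c θ h1 h2⟩
  rcases Set.eq_empty_or_nonempty {r : ℝ | ∃ P : Finset (Finset (Fin d → ℝ)),
      IsExplainablePartition X (i + 2) P ∧ r = spacing dist P} with he | hn
  · have hM : maxSpacing X dist (i + 2) = 0 := by
      unfold maxSpacing
      rw [he, Real.sSup_empty]
    rw [hM]
    have : ∃ ℓ ∈ L, 1 < ℓ.card := by
      by_contra! hcon
      have h1 : X ⊆ L.biUnion id := by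
        intro x hx
        obtain ⟨s, hs, hxs⟩ := hcov x hx
        exact Finset.mem_biUnion.2 ⟨s, hs, hxs⟩
      have h2 := Finset.card_le_card h1
      have h3 := Finset.card_biUnion_le_card_mul L id 1 hcon
      omega
    obtain ⟨ℓ, hℓ, hc⟩ := this
    obtain ⟨x, hx, y, hy, hxy⟩ := Finset.one_lt_card.1 hc
    obtain ⟨c, hc⟩ := Function.ne_iff.1 hxy
    have : ∃ θ : ℝ, (ℓ.filter fun x => x c ≤ θ).Nonempty ∧
        (ℓ.filter fun x => θ < x c).Nonempty := by
      rcases lt_or_gt_of_ne hc with h | h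
      · exact ⟨x c, ⟨x, by simp [hx]⟩, ⟨y, by simp [hy, h]⟩⟩
      · exact ⟨y c, ⟨y, by simp [hy]⟩, ⟨x, by simp [hx, h]⟩⟩
    obtain ⟨θ, h1, h2⟩ := this
    exact ⟨ℓ, hℓ, c, θ, h1, h2, fun _ _ _ _ _ _ _ _ _ => hdist _ _,
      fun _ _ _ _ _ _ => ⟨hdist _ _, hdist _ _⟩⟩
  · obtain ⟨P, hP, hM⟩ := hn.csSup_mem (maxSet_finite X dist (i + 2))
    change maxSpacing X dist (i + 2) = _ at hM
    rw [hM]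
    have hL1 : ∀ s ∈ L, ∀ s' ∈ L, s ≠ s' → ∀ x ∈ s, ∀ y ∈ s', spacing dist P ≤ dist x y := by
      intro s hs s' hs' hne x hx y hy
      have h1 : 1 < L.card := Finset.one_lt_card.2 ⟨s, hs, s', hs', hne⟩
      obtain ⟨Q, hQ, hPQ⟩ := contract_spacing X dist hdist (i + 1) (by omega) P hP
      have h2 : spacing dist Q ≤ maxSpacing X dist (i + 1) :=
        le_csSup (maxSet_finite X dist (i + 1)).bddAbove ⟨Q, hQ, rfl⟩
      have h3 := spacing_le dist hdist hs hs' hne hx hy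
      linarith
    obtain ⟨t, ht, hne, rfl⟩ := hP
    have hex : ∃ ℓ ∈ L, ¬ ∃ g ∈ inducedGroups X t, ℓ ⊆ g := by
      by_contra! hcon
      choose! f hf hf' using hcon
      have h1 : (inducedGroups X t).toFinset ⊆ L.image f := by
        intro g hg
        rw [List.mem_toFinset] at hg
        obtain ⟨x, hx⟩ := hne g hg
        obtain ⟨s, hs, hxs⟩ := hcov x (groups_subset X t g hg hx)
        exact Finset.mem_image.2 ⟨s, hs, groups_eq X t (hf s hs) hg (hf' s hs hxs) hx⟩
      have h2 := (Finset.card_le_card h1).trans Finset.card_image_le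
      rw [List.toFinset_card_of_nodup (groups_nodup X t hne), groups_length, ht] at h2
      omega
    obtain ⟨ℓ, hℓ, hnot⟩ := hex
    obtain ⟨c, θ, h1, h2, h3⟩ := groups_split t ℓ X (hsub ℓ hℓ) hnot
    refine ⟨ℓ, hℓ, c, θ, h1, h2, hL1, ?_⟩
    intro x hx y hy hxc hyc
    obtain ⟨g, hg, g', hg', hgg, hxg, hyg⟩ := h3 x hx y hy hxc hyc
    rw [← List.mem_toFinset] at hg hg'
    exact ⟨spacing_le dist hdist hg hg' hgg hxg hyg,
      spacing_le dist hdist hg' hg hgg.symm hyg hxg⟩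
end
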